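/- arXiv:1702.07868 — 2 statements merged into one kernel-verified Lean document; each statement's English description precedes it below -/
import Mathlib

section
/- Let (x*, 0) with x* ∈ (−R, R), x* ≠ r₀, be a critical point of X, and set ν* = ((x*)² − R²)/((x* − r₀)(x* − R²/r₀)). Then the determinant of the Jacobian matrix of X at (x*, 0) equals −θ₀²·ν*·(2 + ν*). Moreover, if φ₀ > 0 and x* ∈ (−R, 0) then this determinant is positive (so (x*,0) is a linear center), and if φ₀ > 0 and x* ∈ (r₀, R) then this determinant is negative (so (x*,0) is a hyperbolic saddle). -/
/-- The Jacobian matrix of a planar vector field `X : ℝ → ℝ → ℝ × ℝ` at the point `(x, y)`. -/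
noncomputable def jacobianMatrix (X : ℝ → ℝ → ℝ × ℝ) (x y : ℝ) : Matrix (Fin 2) (Fin 2) ℝ :=
  !![deriv (fun s => (X s y).1) x, deriv (fun s => (X x s).1) y;
     deriv (fun s => (X s y).2) x, deriv (fun s => (X x s).2) y]

/-!
The solid rotation contributes an antisymmetric part to the Jacobian and the vortex pair a symmetric
trace-free one, so on the axis joining the vortices the Jacobian is `θ` times
`!![0, κ - 1; κ + 1, 0]` with `κ = c (1 / a² - 1 / b²)`, where `a = x - p` and `b = x - q`.
The critical point equation reads `x = c (1 / a - 1 / b)`, and factoring the difference of squares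
turns it into `κ = x (1 / a + 1 / b) = 1 + ν`. The determinant is therefore `-θ² ν (2 + ν)`, and
its sign is read off from the position of `ν` relative to `-2` and `0`.
-/

section Calculus

variable {𝕜 : Type*} [NontriviallyNormedField 𝕜] {x y : 𝕜}

theorem hasDerivAt_div_sq_add_sq (h : x ^ 2 + y ^ 2 ≠ 0) :
    HasDerivAt (fun t => t / (t ^ 2 + y ^ 2)) ((y ^ 2 - x ^ 2) / (x ^ 2 + y ^ 2) ^ 2) x := by
  refine ((hasDerivAt_id' x).fun_div ((hasDerivAt_pow 2 x).add_const (y ^ 2)) h).congr_deriv ?_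
  congr 1
  push_cast
  ring

theorem hasDerivAt_const_div_sq_add_sq (h : x ^ 2 + y ^ 2 ≠ 0) :
    HasDerivAt (fun t => y / (t ^ 2 + y ^ 2)) (-(2 * x * y) / (x ^ 2 + y ^ 2) ^ 2) x := by
  refine ((hasDerivAt_const x y).fun_div
    ((hasDerivAt_pow 2 x).add_const (y ^ 2)) h).congr_deriv ?_
  congr 1
  push_cast
  ring

end Calculus

/-- The superposition of the solid rotation with angular velocity `θ` and the flow of two point
vortices of circulation `-2 * π * c * θ` at `(p, 0)` and `2 * π * c * θ` at `(q, 0)`. The vortex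
field of a disc of radius `R` is the case `q = R ^ 2 / p` of an image vortex. -/
noncomputable def vortexPairField (θ c p q x y : ℝ) : ℝ × ℝ :=
  (-θ * y + c * θ * (y / ((x - p) ^ 2 + y ^ 2) - y / ((x - q) ^ 2 + y ^ 2)),
   θ * x - c * θ * ((x - p) / ((x - p) ^ 2 + y ^ 2) - (x - q) / ((x - q) ^ 2 + y ^ 2)))

/-- The strain rate `κ` that the vortex pair induces at the point `(x, 0)` of its axis, measured in
units of the angular velocity `θ` of the solid rotation. -/
noncomputable def axialStrain (c p q x : ℝ) : ℝ :=
  c * (1 / (x - p) ^ 2 - 1 / (x - q) ^ 2)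

/-- The quantity `ν` by which the axial strain exceeds `1` at an on-axis critical point; it is the
`ν*` of the paper, with `p * q` in place of `R ^ 2`. -/
noncomputable def strainExcess (p q x : ℝ) : ℝ :=
  (x ^ 2 - p * q) / ((x - p) * (x - q))

section Jacobian

variable {θ c p q x y : ℝ}

theorem jacobianMatrix_vortexPairField
    (hp : (x - p) ^ 2 + y ^ 2 ≠ 0) (hq : (x - q) ^ 2 + y ^ 2 ≠ 0) :
    jacobianMatrix (vortexPairField θ c p q) x y =
      let D a := (a ^ 2 - y ^ 2) / (a ^ 2 + y ^ 2) ^ 2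
      let S a := 2 * a * y / (a ^ 2 + y ^ 2) ^ 2
      θ • !![-c * (S (x - p) - S (x - q)), c * (D (x - p) - D (x - q)) - 1;
             c * (D (x - p) - D (x - q)) + 1, c * (S (x - p) - S (x - q))] := by
  have hp' : y ^ 2 + (x - p) ^ 2 ≠ 0 := by rwa [add_comm]
  have hq' : y ^ 2 + (x - q) ^ 2 ≠ 0 := by rwa [add_comm]
  have h₁₁ := ((((hasDerivAt_const_div_sq_add_sq hp).comp_sub_const x p).fun_sub
    ((hasDerivAt_const_div_sq_add_sq hq).comp_sub_const x q)).const_mul (c * θ)).const_add (-θ * y)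
  have h₁₂ := ((hasDerivAt_id' y).const_mul (-θ)).fun_add
    (((hasDerivAt_div_sq_add_sq hp').fun_sub (hasDerivAt_div_sq_add_sq hq')).const_mul (c * θ))
  have h₂₁ := ((hasDerivAt_id' x).const_mul θ).fun_sub
    ((((hasDerivAt_div_sq_add_sq hp).comp_sub_const x p).fun_sub
      ((hasDerivAt_div_sq_add_sq hq).comp_sub_const x q)).const_mul (c * θ))
  have h₂₂ := (((hasDerivAt_const_div_sq_add_sq hp').fun_sub
    (hasDerivAt_const_div_sq_add_sq hq')).const_mul (c * θ)).const_sub (θ * x)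
  simp only [add_comm _ ((x - p) ^ 2), add_comm _ ((x - q) ^ 2)] at h₁₂ h₂₂
  simp only [jacobianMatrix, vortexPairField, h₁₁.deriv, h₁₂.deriv, h₂₁.deriv, h₂₂.deriv,
    Matrix.smul_of, Matrix.smul_cons, Matrix.smul_empty, smul_eq_mul]
  ring_nf

theorem jacobianMatrix_vortexPairField_axis (hp : x ≠ p) (hq : x ≠ q) :
    jacobianMatrix (vortexPairField θ c p q) x 0 =
      θ • !![0, axialStrain c p q x - 1; axialStrain c p q x + 1, 0] := by
  have inv_sq (a : ℝ) : a ^ 2 / (a ^ 2) ^ 2 = 1 / a ^ 2 := by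
    rw [sq (a ^ 2), div_self_mul_self', one_div]
  have hp' : (x - p) ^ 2 + 0 ^ 2 ≠ 0 := by simpa [sub_eq_zero] using hp
  have hq' : (x - q) ^ 2 + 0 ^ 2 ≠ 0 := by simpa [sub_eq_zero] using hq
  simp [jacobianMatrix_vortexPairField hp' hq', axialStrain, inv_sq]

theorem eq_of_vortexPairField_axis_eq_zero (hθ : θ ≠ 0)
    (hcrit : vortexPairField θ c p q x 0 = (0, 0)) :
    x = c * (1 / (x - p) - 1 / (x - q)) := by
  have inv_self (a : ℝ) : a / a ^ 2 = 1 / a := by rw [sq, div_self_mul_self', one_div]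
  have hv : θ * x - c * θ * (1 / (x - p) - 1 / (x - q)) = 0 := by
    simpa [vortexPairField, inv_self] using congrArg Prod.snd hcrit
  exact mul_left_cancel₀ hθ (by linear_combination hv)

theorem axialStrain_eq_one_add_strainExcess (hp : x ≠ p) (hq : x ≠ q)
    (hx : x = c * (1 / (x - p) - 1 / (x - q))) :
    axialStrain c p q x = 1 + strainExcess p q x := by
  have ha : x - p ≠ 0 := sub_ne_zero.mpr hp
  have hb : x - q ≠ 0 := sub_ne_zero.mpr hq
  calc axialStrain c p q x
      = c * (1 / (x - p) - 1 / (x - q)) * (1 / (x - p) + 1 / (x - q)) := by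
        rw [axialStrain, ← one_div_pow, ← one_div_pow]; ring
    _ = x * (1 / (x - p) + 1 / (x - q)) := by rw [← hx]
    _ = 1 + strainExcess p q x := by rw [strainExcess]; field_simp; ring

theorem det_jacobianMatrix_vortexPairField_of_critical (hθ : θ ≠ 0) (hp : x ≠ p)
    (hq : x ≠ q) (hcrit : vortexPairField θ c p q x 0 = (0, 0)) :
    (jacobianMatrix (vortexPairField θ c p q) x 0).det =
      -θ ^ 2 * strainExcess p q x * (2 + strainExcess p q x) := by
  rw [jacobianMatrix_vortexPairField_axis hp hq,
    axialStrain_eq_one_add_strainExcess hp hq (eq_of_vortexPairField_axis_eq_zero hθ hcrit),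
    Matrix.det_smul, Matrix.det_fin_two_of, Fintype.card_fin]
  ring

end Jacobian

section Sign

variable {p q x : ℝ}

theorem strainExcess_pos (hp : p < x) (hq : x < q) (hx : x ^ 2 < p * q) :
    0 < strainExcess p q x :=
  div_pos_of_neg_of_neg (sub_neg.mpr hx) (mul_neg_of_pos_of_neg (sub_pos.mpr hp) (sub_neg.mpr hq))

theorem strainExcess_neg (hp : x < p) (hq : x < q) (hx : x ^ 2 < p * q) :
    strainExcess p q x < 0 :=
  div_neg_of_neg_of_pos (sub_neg.mpr hx) (mul_pos_of_neg_of_neg (sub_neg.mpr hp) (sub_neg.mpr hq))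

theorem neg_two_lt_strainExcess (hp : 0 < p) (hq : 0 < q) (hx : x < 0) :
    -2 < strainExcess p q x := by
  have hab : 0 < (x - p) * (x - q) :=
    mul_pos_of_neg_of_neg (sub_neg.mpr (hx.trans hp)) (sub_neg.mpr (hx.trans hq))
  have hxpq : x * (p + q) < 0 := mul_neg_of_neg_of_pos hx (add_pos hp hq)
  have hpq : 0 < p * q := mul_pos hp hq
  rw [strainExcess, lt_div_iff₀ hab]
  linear_combination 3 * sq_nonneg x + 2 * hxpq + hpq

end Sign

theorem on_axis_jacobian_det_general {θ c p q x : ℝ} (hθ : θ ≠ 0) (hp : x ≠ p) (hq : x ≠ q)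
    (hcrit : vortexPairField θ c p q x 0 = (0, 0)) :
    (jacobianMatrix (vortexPairField θ c p q) x 0).det =
        -θ ^ 2 * strainExcess p q x * (2 + strainExcess p q x) ∧
      (0 < p → 0 < q → x < 0 → x ^ 2 < p * q →
        0 < (jacobianMatrix (vortexPairField θ c p q) x 0).det) ∧
      (p < x → x < q → x ^ 2 < p * q →
        (jacobianMatrix (vortexPairField θ c p q) x 0).det < 0) := by
  have hθ_sq : -θ ^ 2 < 0 := neg_neg_of_pos (sq_pos_of_ne_zero hθ)
  rw [det_jacobianMatrix_vortexPairField_of_critical hθ hp hq hcrit]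
  refine ⟨rfl, fun hp₀ hq₀ hx₀ hxpq => ?_, fun hpx hxq hxpq => ?_⟩
  · have hν : strainExcess p q x < 0 :=
      strainExcess_neg (hx₀.trans hp₀) (hx₀.trans hq₀) hxpq
    have hν₂ : -2 < strainExcess p q x := neg_two_lt_strainExcess hp₀ hq₀ hx₀
    exact mul_pos (mul_pos_of_neg_of_neg hθ_sq hν) (by linarith)
  · have hν : 0 < strainExcess p q x := strainExcess_pos hpx hxq hxpq
    exact mul_neg_of_neg_of_pos (mul_neg_of_neg_of_pos hθ_sq hν) (by linarith)

/-- at an on-axis critical point `(x*, 0)` the Jacobian determinant equals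
`−θ₀²·ν*·(2 + ν*)` with `ν* = ((x*)² − R²)/((x* − r₀)(x* − R²/r₀))`; moreover for
`φ₀ > 0` it is positive when `x* ∈ (−R, 0)` (linear center) and negative when
`x* ∈ (r₀, R)` (hyperbolic saddle). -/
theorem on_axis_jacobian_det
    (R r₀ θ₀ Γ : ℝ)
    (hR : 0 < R) (hr₀ : 0 < r₀) (hrR : r₀ < R) (hθ : θ₀ ≠ 0) (hΓ : Γ ≠ 0)
    (c φ₀ : ℝ) (hc : c = Γ / (2 * Real.pi * θ₀)) (hφ : φ₀ = R ^ 2 / c)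
    (X : ℝ → ℝ → ℝ × ℝ)
    (hX : ∀ x y : ℝ, X x y =
      (-θ₀ * y + c * θ₀ * y *
          (1 / ((x - r₀) ^ 2 + y ^ 2) - 1 / ((x - R ^ 2 / r₀) ^ 2 + y ^ 2)),
       θ₀ * x - c * θ₀ *
          ((x - r₀) / ((x - r₀) ^ 2 + y ^ 2) -
            (x - R ^ 2 / r₀) / ((x - R ^ 2 / r₀) ^ 2 + y ^ 2))))
    (x : ℝ) (hx₁ : -R < x) (hx₂ : x < R) (hx₃ : x ≠ r₀)
    (hcrit : X x 0 = (0, 0))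
    (ν : ℝ) (hν : ν = (x ^ 2 - R ^ 2) / ((x - r₀) * (x - R ^ 2 / r₀))) :
    (jacobianMatrix X x 0).det = -θ₀ ^ 2 * ν * (2 + ν) ∧
    (0 < φ₀ → x < 0 → 0 < (jacobianMatrix X x 0).det) ∧
    (0 < φ₀ → r₀ < x → (jacobianMatrix X x 0).det < 0) := by
  have hX_eq : X = vortexPairField θ₀ c r₀ (R ^ 2 / r₀) := by
    funext s t
    rw [hX, vortexPairField]
    ring_nf
  have hRq : R < R ^ 2 / r₀ := by rw [lt_div_iff₀ hr₀, sq]; gcongr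
  have hpq : r₀ * (R ^ 2 / r₀) = R ^ 2 := mul_div_cancel₀ _ hr₀.ne'
  have hx_sq : x ^ 2 < r₀ * (R ^ 2 / r₀) := (sq_lt_sq' hx₁ hx₂).trans_eq hpq.symm
  have hν_eq : ν = strainExcess r₀ (R ^ 2 / r₀) x := by rw [hν, strainExcess, hpq]
  subst hX_eq hν_eq
  obtain ⟨hdet, hcenter, hsaddle⟩ :=
    on_axis_jacobian_det_general hθ hx₃ (hx₂.trans hRq).ne hcrit
  exact ⟨hdet, fun _ hx => hcenter hr₀ (hR.trans hRq) hx hx_sq,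
    fun _ hx => hsaddle hx (hx₂.trans hRq) hx_sq⟩
end

section
/- Assume φ₀ > 0 and ρ₀ = (1 − φ₀)/(1 + φ₀). Then the unique critical point of X in the closed disk D_R is the boundary point (−R, 0), and the determinant of the Jacobian matrix of X at (−R, 0) is zero, i.e. (−R, 0) is a degenerate singular point. (Case (f) of Theorem 1.) -/
/-!
Write `z = x + iy` and let `b = R² / r₀` be the mirror image of the vortex `r₀` in the circle of
radius `R`. Away from the singular points, `X` vanishes at `z` exactly when
`conj z * (z - r₀) * (z - b) = -(c * (b - r₀))`. On the curve `ρ₀ = (1 - φ₀) / (1 + φ₀)` the right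
side equals `-(R * (R + r₀) * (R + b))`, and its modulus is the largest value that
`‖z‖ * ‖z - r₀‖ * ‖z - b‖` takes on the disk `‖z‖ ≤ R`, attained only at `z = -R`.

As a complex number, `X` is `iθ₀ (z - conj (g z))` with `g` holomorphic, so its Jacobian determinant
is `θ₀² (1 - ‖g'‖²)`; on the curve, `g' (-R) = -1`.
-/

open ComplexConjugate

theorem eq_neg_smul_of_add_le_norm_sub_smul {E : Type*} [NormedAddCommGroup E] [NormedSpace ℝ E]
    [StrictConvexSpace ℝ E] {v z : E} {R r : ℝ} (hv : ‖v‖ = 1) (hr : 0 < r) (hz : ‖z‖ ≤ R)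
    (hfar : R + r ≤ ‖z - r • v‖) : z = -(R • v) := by
  have hrv : ‖r • v‖ = r := by rw [norm_smul, hv, mul_one, Real.norm_of_nonneg hr.le]
  have htri : ‖z - r • v‖ ≤ ‖z‖ + r := (norm_sub_le _ _).trans_eq (by rw [hrv])
  have hzR : ‖z‖ = R := by linarith
  have hray : SameRay ℝ z (-(r • v)) := by
    rw [sameRay_iff_norm_add, ← sub_eq_add_neg, norm_neg, hrv]
    linarith
  have hsmul : r • z = r • -(R • v) := by
    have h := hray.norm_smul_eq
    rw [norm_neg, hrv, hzR] at h
    rw [← h, smul_neg, smul_neg, smul_comm]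
  exact smul_right_injective E hr.ne' hsmul

theorem eq_neg_of_le_norm_mul_norm_sub_mul_norm_sub {R r b : ℝ} {z : ℂ} (hR : 0 < R)
    (hr : 0 < r) (hb : 0 ≤ b) (hz : ‖z‖ ≤ R)
    (hmax : R * (R + r) * (R + b) ≤ ‖z‖ * ‖z - r‖ * ‖z - b‖) : z = -R := by
  have hzb : ‖z - b‖ ≤ R + b := by
    calc ‖z - b‖ ≤ ‖z‖ + ‖(b : ℂ)‖ := norm_sub_le _ _
      _ ≤ R + b := by rw [Complex.norm_of_nonneg hb]; gcongr
  have hprod : R * (R + r) * (R + b) ≤ R * ‖z - r‖ * (R + b) := hmax.trans (by gcongr)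
  have hfar : R + r ≤ ‖z - r‖ :=
    le_of_mul_le_mul_left (le_of_mul_le_mul_right hprod (by positivity)) hR
  simpa using
    eq_neg_smul_of_add_le_norm_sub_smul (v := (1 : ℂ)) norm_one hr hz (by simpa using hfar)

theorem conj_mul_sub_mul_sub_eq_iff {R r b : ℝ} {z : ℂ} (hR : 0 < R) (hr : 0 < r) (hb : 0 ≤ b)
    (hz : ‖z‖ ≤ R) :
    conj z * (z - r) * (z - b) = ((-(R * (R + r) * (R + b)) : ℝ) : ℂ) ↔ z = -R := by
  constructor
  · intro h
    refine eq_neg_of_le_norm_mul_norm_sub_mul_norm_sub hR hr hb hz (le_of_eq ?_)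
    calc R * (R + r) * (R + b) = ‖((-(R * (R + r) * (R + b)) : ℝ) : ℂ)‖ := by
          rw [Complex.norm_real, norm_neg, Real.norm_of_nonneg (by positivity)]
      _ = ‖z‖ * ‖z - r‖ * ‖z - b‖ := by rw [← h, norm_mul, norm_mul, Complex.norm_conj]
  · rintro rfl
    rw [map_neg, Complex.conj_ofReal]
    push_cast
    ring

/-- The vortex vector field with vortex at `(r, 0)` and image vortex at `(b, 0)`, where `θ` and `c`
play the roles of `θ₀` and `c = Γ / (2πθ₀)`. The position `b` is a free parameter rather than
`R ^ 2 / r`. At the two singular points the values are the junk ones coming from `x / 0 = 0`. -/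
noncomputable def vortexField (θ c r b x y : ℝ) : ℝ × ℝ :=
  (-θ * y + c * θ * y * (1 / ((x - r) ^ 2 + y ^ 2) - 1 / ((x - b) ^ 2 + y ^ 2)),
    θ * x - c * θ * ((x - r) / ((x - r) ^ 2 + y ^ 2) - (x - b) / ((x - b) ^ 2 + y ^ 2)))

section VortexField

variable {R θ c r b : ℝ}

theorem vortexField_eq_equivRealProd (z : ℂ) :
    vortexField θ c r b z.re z.im =
      Complex.equivRealProd (Complex.I * θ * conj (conj z - c * ((z - r)⁻¹ - (z - b)⁻¹))) := by
  ext <;> simp [vortexField, Complex.normSq_apply] <;> ring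

theorem vortexField_eq_zero_iff {z : ℂ} (hθ : θ ≠ 0) (hr : z ≠ r) (hb : z ≠ b) :
    vortexField θ c r b z.re z.im = (0, 0) ↔
      conj z * (z - r) * (z - b) = ((-(c * (b - r)) : ℝ) : ℂ) := by
  have hzr : z - r ≠ 0 := sub_ne_zero.2 hr
  have hzb : z - b ≠ 0 := sub_ne_zero.2 hb
  have hIθ : Complex.I * θ ≠ 0 := mul_ne_zero Complex.I_ne_zero (Complex.ofReal_ne_zero.2 hθ)
  have hclear : (conj z - c * ((z - r)⁻¹ - (z - b)⁻¹)) * ((z - r) * (z - b)) =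
      conj z * (z - r) * (z - b) - ((-(c * (b - r)) : ℝ) : ℂ) := by
    push_cast
    field_simp
    ring
  calc vortexField θ c r b z.re z.im = (0, 0)
      ↔ Complex.I * θ * conj (conj z - c * ((z - r)⁻¹ - (z - b)⁻¹)) = 0 := by
        rw [vortexField_eq_equivRealProd, Complex.equivRealProd_apply, Prod.mk.injEq,
          Complex.ext_iff, Complex.zero_re, Complex.zero_im]
    _ ↔ conj z - c * ((z - r)⁻¹ - (z - b)⁻¹) = 0 := by
        rw [mul_eq_zero_iff_left hIθ, map_eq_zero]
    _ ↔ conj z * (z - r) * (z - b) = ((-(c * (b - r)) : ℝ) : ℂ) := by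
        rw [← sub_eq_zero (b := ((-(c * (b - r)) : ℝ) : ℂ)), ← hclear,
          mul_eq_zero_iff_right (mul_ne_zero hzr hzb)]

theorem vortexField_eq_zero_iff_eq_neg {z : ℂ} (hθ : θ ≠ 0) (hR : 0 < R) (hr : 0 < r)
    (hRb : R < b) (hc : c * (b - r) = R * (R + r) * (R + b)) (hz : ‖z‖ ≤ R) (hzr : z ≠ r) :
    vortexField θ c r b z.re z.im = (0, 0) ↔ z = -R := by
  have hb : 0 < b := hR.trans hRb
  have hzb : z ≠ b := by
    rintro rfl
    rw [Complex.norm_of_nonneg hb.le] at hz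
    exact hz.not_gt hRb
  rw [vortexField_eq_zero_iff hθ hzr hzb, hc, conj_mul_sub_mul_sub_eq_iff hR hr hb.le hz]

theorem hasDerivAt_vortexField_fst_zero {x : ℝ} (hr : x ≠ r) (hb : x ≠ b) :
    HasDerivAt (fun s => (vortexField θ c r b x s).1)
      (-θ + c * θ * (1 / (x - r) ^ 2 - 1 / (x - b) ^ 2)) 0 := by
  let g : ℝ → ℝ := fun s =>
    -θ + c * θ * (1 / ((x - r) ^ 2 + s ^ 2) - 1 / ((x - b) ^ 2 + s ^ 2))
  have hg : DifferentiableAt ℝ g 0 := by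
    have hxr : (x - r) ^ 2 + (0 : ℝ) ^ 2 ≠ 0 := by simpa [sub_eq_zero] using hr
    have hxb : (x - b) ^ 2 + (0 : ℝ) ^ 2 ≠ 0 := by simpa [sub_eq_zero] using hb
    fun_prop (disch := assumption)
  have hfst : (fun s => (vortexField θ c r b x s).1) = fun s => s * g s := by
    funext s
    simp only [vortexField, g]
    ring
  rw [hfst]
  exact ((hasDerivAt_id (0 : ℝ)).mul hg.hasDerivAt).congr_deriv (by simp [g])

theorem vortexField_snd_axis (x : ℝ) :
    (vortexField θ c r b x 0).2 = θ * x - c * θ * ((x - r)⁻¹ - (x - b)⁻¹) := by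
  simp only [vortexField, sq, mul_zero, add_zero, div_self_mul_self']

theorem hasDerivAt_vortexField_snd_axis {x : ℝ} (hr : x ≠ r) (hb : x ≠ b) :
    HasDerivAt (fun s => (vortexField θ c r b s 0).2)
      (θ + c * θ * (1 / (x - r) ^ 2 - 1 / (x - b) ^ 2)) x := by
  simp only [vortexField_snd_axis]
  have hinv {a : ℝ} (ha : x ≠ a) : HasDerivAt (fun s => (s - a)⁻¹) (-1 / (x - a) ^ 2) x :=
    ((hasDerivAt_id x).sub_const a).fun_inv (sub_ne_zero.2 ha)
  exact (((hasDerivAt_id x).const_mul θ).sub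
    (((hinv hr).sub (hinv hb)).const_mul (c * θ))).congr_deriv (by ring)

theorem det_jacobianMatrix_vortexField_axis {x : ℝ} (hr : x ≠ r) (hb : x ≠ b) :
    (jacobianMatrix (vortexField θ c r b) x 0).det =
      θ ^ 2 * (1 - (c * (1 / (x - r) ^ 2 - 1 / (x - b) ^ 2)) ^ 2) := by
  have hfst_axis : deriv (fun s => (vortexField θ c r b s 0).1) x = 0 := by
    simp [vortexField]
  rw [jacobianMatrix, Matrix.det_fin_two_of, hfst_axis,
    (hasDerivAt_vortexField_fst_zero hr hb).deriv, (hasDerivAt_vortexField_snd_axis hr hb).deriv]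
  ring

theorem det_jacobianMatrix_vortexField_neg_eq_zero (hR : 0 < R) (hr : 0 < r)
    (hrb : r * b = R ^ 2) (hc : c * (b - r) = R * (R + r) * (R + b)) :
    (jacobianMatrix (vortexField θ c r b) (-R) 0).det = 0 := by
  have hb : 0 < b := pos_of_mul_pos_right (hrb ▸ pow_pos hR 2) hr.le
  have hslope : c * (1 / (-R - r) ^ 2 - 1 / (-R - b) ^ 2) = 1 := by
    calc c * (1 / (-R - r) ^ 2 - 1 / (-R - b) ^ 2)
        = c * (b - r) * (2 * R + r + b) / ((R + r) ^ 2 * (R + b) ^ 2) := by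
          rw [← neg_add', ← neg_add', neg_sq, neg_sq]
          field_simp
          ring
      _ = R * (2 * R + r + b) / ((R + r) * (R + b)) := by
          rw [hc]
          field_simp
      _ = 1 := by
          rw [div_eq_one_iff_eq (by positivity)]
          linear_combination -hrb
  rw [det_jacobianMatrix_vortexField_axis (by linarith) (by linarith), hslope]
  ring

end VortexField

theorem mul_sub_eq_of_div_eq_one_sub_div_one_add {R r b c : ℝ} (hR : R ≠ 0) (hr : r ≠ 0)
    (hrb : r * b = R ^ 2) (hpos : 0 < R ^ 2 / c)
    (hcurve : r / R = (1 - R ^ 2 / c) / (1 + R ^ 2 / c)) :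
    c * (b - r) = R * (R + r) * (R + b) := by
  have hc : c ≠ 0 := by
    rintro rfl
    simp at hpos
  have hcR : c * (R - r) = R ^ 2 * (R + r) := by
    have hφc : R ^ 2 / c * c = R ^ 2 := div_mul_cancel₀ _ hc
    rw [div_eq_div_iff hR (by positivity)] at hcurve
    linear_combination (-c) * hcurve + (R + r) * hφc
  apply mul_left_cancel₀ hr
  linear_combination (R + r) * hcR + (c - R * (R + r)) * hrb

/-- case (f) of Theorem 1: for `φ₀ > 0` and `ρ₀ = (1 − φ₀)/(1 + φ₀)` the
unique critical point of `X` in `D_R` is the boundary point `(−R, 0)`, which is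
degenerate: the Jacobian determinant there vanishes. -/
theorem case_f_degenerate_saddle
    (R r₀ θ₀ Γ : ℝ)
    (hR : 0 < R) (hr₀ : 0 < r₀) (hrR : r₀ < R) (hθ : θ₀ ≠ 0) (hΓ : Γ ≠ 0)
    (c ρ₀ φ₀ : ℝ) (hc : c = Γ / (2 * Real.pi * θ₀))
    (hρ : ρ₀ = r₀ / R) (hφ : φ₀ = R ^ 2 / c) (hφpos : 0 < φ₀)
    (hcurve : ρ₀ = (1 - φ₀) / (1 + φ₀))
    (X : ℝ → ℝ → ℝ × ℝ)
    (hX : ∀ x y : ℝ, X x y =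
      (-θ₀ * y + c * θ₀ * y *
          (1 / ((x - r₀) ^ 2 + y ^ 2) - 1 / ((x - R ^ 2 / r₀) ^ 2 + y ^ 2)),
       θ₀ * x - c * θ₀ *
          ((x - r₀) / ((x - r₀) ^ 2 + y ^ 2) -
            (x - R ^ 2 / r₀) / ((x - R ^ 2 / r₀) ^ 2 + y ^ 2)))) :
    X (-R) 0 = (0, 0) ∧
    (jacobianMatrix X (-R) 0).det = 0 ∧
    (∀ x y : ℝ, x ^ 2 + y ^ 2 ≤ R ^ 2 → (x, y) ≠ (r₀, 0) → X x y = (0, 0) →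
      (x, y) = (-R, 0)) := by
  subst hρ hφ
  obtain rfl : X = vortexField θ₀ c r₀ (R ^ 2 / r₀) := funext₂ hX
  have hrb : r₀ * (R ^ 2 / r₀) = R ^ 2 := mul_div_cancel₀ _ hr₀.ne'
  have hRb : R < R ^ 2 / r₀ := by
    rw [lt_div_iff₀ hr₀, sq]
    gcongr
  have hcurve' := mul_sub_eq_of_div_eq_one_sub_div_one_add hR.ne' hr₀.ne' hrb hφpos hcurve
  have hzero {z : ℂ} (hz : ‖z‖ ≤ R) (hzr : z ≠ r₀) :
      vortexField θ₀ c r₀ (R ^ 2 / r₀) z.re z.im = (0, 0) ↔ z = -R :=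
    vortexField_eq_zero_iff_eq_neg hθ hR hr₀ hRb hcurve' hz hzr
  refine ⟨?_, det_jacobianMatrix_vortexField_neg_eq_zero hR hr₀ hrb hcurve', ?_⟩
  · have hne : (-R : ℂ) ≠ r₀ := by
      norm_cast
      linarith
    simpa using (hzero (by simp [abs_of_pos hR]) hne).2 rfl
  · intro x y hxy hne hX0
    have hz : ‖(⟨x, y⟩ : ℂ)‖ ≤ R := by
      rw [Complex.norm_def, Complex.normSq_mk, ← sq, ← sq]
      exact Real.sqrt_le_iff.2 ⟨hR.le, hxy⟩
    have hzr : (⟨x, y⟩ : ℂ) ≠ r₀ := by simpa [Complex.ext_iff] using hne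
    simpa [Complex.ext_iff] using (hzero hz hzr).1 hX0
end
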